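/- Let Γ be a finite group and consider a walk setup on Γ (symmetric primitive adjacency matrix A : Fin n → Fin n → ℕ with vertex labels t : Fin n → Γ) such that the set {t i : i : Fin n} generates Γ, and such that for every group homomorphism ρ : Γ →* ℂˣ with ρ not identically 1 there exist indices i, j with ρ (t i) ≠ ρ (t j). Fix two vertices i₀, j₀ : Fin n, and for γ ∈ Γ let P_{N,i₀,j₀}(γ) be (sum of the weights of walks w of length N with w 0 = i₀, w N = j₀ and γ_w = γ) / (sum of the weights of all walks of length N with w 0 = i₀ and w N = j₀). Then there exist N₀, a constant C > 0 and c with 0 < c < 1 such that for every N ≥ N₀: the total weight of walks of length N from i₀ to j₀ is positive, and for every γ ∈ Γ, |P_{N,i₀,j₀}(γ) − 1/|Γ|| ≤ C · c^N. -/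

import Mathlib

open scoped BigOperators

/-!
Walks in the graph `A`, together with their group elements, are walks in the skew product `B` of
`A` with `Γ`, so the theorem is about the powers of `B`.

`B` is primitive. Let `S N i` be the set of group elements of the walks of length `N` from a fixed
vertex to `i`. An edge `i → j` gives `t j • S N i ⊆ S (N + 1) j`. As `A` is primitive, all `S N i`
eventually have the same maximal cardinality, and the inclusions become equalities. Then two
vertices with a common successor have the same set, so irreducibility of `A * Aᵀ` makes
`S N i = T N` independent of `i`, with `t j • T N = T (N + 1)` for all `j`. The elements fixing
every `T N` form a normal subgroup `D` modulo which all the labels `t j` agree; hence `Γ ⧸ D` is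
cyclic, and if it were nontrivial it would carry a nontrivial character, constant on the labels. So
`D = Γ` and `T N = Γ`.

By Doeblin's argument a positive power of `B` contracts, by a fixed factor, the interval containing
the ratios `a x / w x` of two row vectors. This is applied to the point mass `a` at `(i₀, t i₀)` and
the indicator `w` of the fibre over `i₀`: the vectors `w ᵥ* B ^ N` are constant along the fibres, so
the row `a ᵥ* B ^ N` is exponentially close to being uniform on each of them.
-/

section NonnegativeMatrices

variable {l m n V R : Type*} [Fintype m] [Fintype V] [DecidableEq V]
  [Ring R] [LinearOrder R] [IsStrictOrderedRing R]

theorem mul_apply_pos_iff_of_nonneg {A : Matrix l m R} {B : Matrix m n R} (hA : ∀ i k, 0 ≤ A i k)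
    (hB : ∀ k j, 0 ≤ B k j) {i : l} {j : n} :
    0 < (A * B) i j ↔ ∃ k, 0 < A i k ∧ 0 < B k j := by
  have mul_pos_iff (k : m) : 0 < A i k * B k j ↔ 0 < A i k ∧ 0 < B k j :=
    ⟨fun h ↦ ⟨pos_of_mul_pos_left h (hB k j), pos_of_mul_pos_right h (hA i k)⟩,
      fun h ↦ mul_pos h.1 h.2⟩
  simp only [Matrix.mul_apply, Finset.sum_pos_iff_of_nonneg fun k _ ↦ mul_nonneg (hA i k) (hB k j),
    mul_pos_iff, Finset.mem_univ, true_and]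

theorem pow_succ_apply_pos_iff_of_nonneg {A : Matrix V V R} (hA : ∀ i j, 0 ≤ A i j) {k : ℕ}
    {i j : V} : 0 < (A ^ (k + 1)) i j ↔ ∃ l, 0 < (A ^ k) i l ∧ 0 < A l j := by
  rw [pow_succ, mul_apply_pos_iff_of_nonneg (Matrix.pow_apply_nonneg hA k) hA]

theorem exists_apply_pos_of_isPrimitive {A : Matrix V V R} (hA : A.IsPrimitive) (j : V) :
    ∃ i, 0 < A i j := by
  obtain ⟨k, hk, hpos⟩ := hA.exists_pos_pow
  obtain ⟨k, rfl⟩ := Nat.exists_eq_succ_of_ne_zero hk.ne'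
  exact ((pow_succ_apply_pos_iff_of_nonneg hA.nonneg).1 (hpos j j)).imp fun _ ↦ And.right

theorem eventually_pow_apply_pos_of_isPrimitive {A : Matrix V V R} (hA : A.IsPrimitive) :
    ∀ᶠ k in Filter.atTop, ∀ i j, 0 < (A ^ k) i j := by
  obtain ⟨K, -, hK⟩ := hA.exists_pos_pow
  refine Filter.eventually_atTop.2 ⟨K, fun k hk ↦ ?_⟩
  induction k, hk using Nat.le_induction with
  | base => exact hK
  | succ k _ ih =>
    intro i j
    obtain ⟨l, hl⟩ := exists_apply_pos_of_isPrimitive hA j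
    exact (pow_succ_apply_pos_iff_of_nonneg hA.nonneg).2 ⟨l, ih i l, hl⟩

theorem isIrreducible_mul_transpose_of_isSymm {A : Matrix V V R} (hA : A.IsPrimitive)
    (hsymm : A.IsSymm) : (A * A.transpose).IsIrreducible := by
  obtain ⟨k, hk, hpos⟩ := hA.exists_pos_pow
  refine Matrix.IsPrimitive.isIrreducible ⟨fun i j ↦ ?_, k, hk, fun i j ↦ ?_⟩
  · exact Finset.sum_nonneg fun l _ ↦ mul_nonneg (hA.nonneg i l) (hA.nonneg j l)
  · rw [hsymm.eq, ← sq, ← pow_mul, mul_comm, pow_mul, sq,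
      mul_apply_pos_iff_of_nonneg (Matrix.pow_apply_nonneg hA.nonneg k)
        (Matrix.pow_apply_nonneg hA.nonneg k)]
    exact ⟨i, hpos i i, hpos i j⟩

theorem isPrimitive_map_natCast {A : Matrix V V ℕ} (hA : ∃ k, 1 ≤ k ∧ ∀ i j, 0 < (A ^ k) i j) :
    (A.map (Nat.cast : ℕ → R)).IsPrimitive := by
  obtain ⟨k, hk, hpos⟩ := hA
  refine ⟨fun i j ↦ Nat.cast_nonneg _, k, hk, fun i j ↦ ?_⟩
  rw [← Nat.coe_castRingHom, ← Matrix.map_pow, Matrix.map_apply]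
  exact Nat.cast_pos.2 (hpos i j)

end NonnegativeMatrices

section GeneratingFamilies

variable {ι Γ : Type*} [Group Γ] {t : ι → Γ}

theorem normal_of_forall_conj_inv_mem [Finite Γ] (hgen : Subgroup.closure (Set.range t) = ⊤)
    {D : Subgroup Γ} (hconj : ∀ j, ∀ g ∈ D, (t j)⁻¹ * g * t j ∈ D) : D.Normal := by
  rw [← Subgroup.normalizer_eq_top_iff, eq_top_iff, ← hgen, Subgroup.closure_le]
  rintro _ ⟨j, rfl⟩
  refine inv_mem_iff.1 (Subgroup.mem_normalizer_fintype fun g hg ↦ ?_)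
  rw [inv_inv]
  exact hconj j g hg

theorem isCyclic_quotient_of_inv_mul_mem [Nonempty ι]
    (hgen : Subgroup.closure (Set.range t) = ⊤) {D : Subgroup Γ} [D.Normal]
    (hD : ∀ i j, (t i)⁻¹ * t j ∈ D) : IsCyclic (Γ ⧸ D) := by
  inhabit ι
  have hle : Subgroup.closure (Set.range t) ≤
      (Subgroup.zpowers (t default : Γ ⧸ D)).comap (QuotientGroup.mk' D) := by
    rw [Subgroup.closure_le]
    rintro _ ⟨j, rfl⟩
    have heq : (t j : Γ ⧸ D) = t default := QuotientGroup.eq.2 (hD j default)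
    simp [heq]
  refine ⟨t default, fun q ↦ ?_⟩
  obtain ⟨g, rfl⟩ := QuotientGroup.mk_surjective q
  exact hle (hgen ▸ Subgroup.mem_top g)

theorem eq_top_of_inv_mul_mem [Nonempty ι] (hgen : Subgroup.closure (Set.range t) = ⊤)
    (hrho : ∀ ρ : Γ →* ℂˣ, (∃ γ, ρ γ ≠ 1) → ∃ i j, ρ (t i) ≠ ρ (t j))
    {D : Subgroup Γ} [D.Normal] [D.FiniteIndex] (hD : ∀ i j, (t i)⁻¹ * t j ∈ D) : D = ⊤ := by
  have := isCyclic_quotient_of_inv_mul_mem hgen hD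
  let _ : CommGroup (Γ ⧸ D) := IsCyclic.commGroup
  have : NeZero (Monoid.exponent (Γ ⧸ D)) := ⟨Monoid.exponent_ne_zero_of_finite⟩
  refine (Subgroup.eq_top_iff' D).2 fun g ↦ ?_
  by_contra hg
  obtain ⟨φ, hφ⟩ := CommGroup.exists_apply_ne_one_of_hasEnoughRootsOfUnity (Γ ⧸ D) ℂ
    ((QuotientGroup.eq_one_iff g).not.2 hg)
  obtain ⟨i, j, hij⟩ := hrho (φ.comp (QuotientGroup.mk' D)) ⟨g, hφ⟩
  exact hij (congrArg φ (QuotientGroup.eq.2 (hD i j)))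

theorem smul_eq_of_forall_smul_eq_succ [Finite Γ] [Nonempty ι] {α : Type*} [MulAction Γ α]
    (hgen : Subgroup.closure (Set.range t) = ⊤)
    (hrho : ∀ ρ : Γ →* ℂˣ, (∃ γ, ρ γ ≠ 1) → ∃ i j, ρ (t i) ≠ ρ (t j))
    {T : ℕ → α} (hT : ∀ N j, t j • T N = T (N + 1)) (N : ℕ) (γ : Γ) : γ • T N = T N := by
  let D : Subgroup Γ := ⨅ N, MulAction.stabilizer Γ (T N)
  have mem_D (g : Γ) : g ∈ D ↔ ∀ N, g • T N = T N := by
    simp only [D, Subgroup.mem_iInf, MulAction.mem_stabilizer_iff]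
  have : D.Normal := normal_of_forall_conj_inv_mem hgen fun j g hg ↦ (mem_D _).2 fun N ↦ by
    rw [mul_smul, mul_smul, hT, (mem_D g).1 hg, inv_smul_eq_iff, hT]
  have hD : D = ⊤ := eq_top_of_inv_mul_mem hgen hrho fun i j ↦ (mem_D _).2 fun N ↦ by
    rw [mul_smul, hT, inv_smul_eq_iff, hT]
  exact (mem_D γ).1 (hD ▸ Subgroup.mem_top γ) N

end GeneratingFamilies

section SetFamilies

open Filter
open scoped Pointwise Finset Matrix

theorem eq_univ_of_forall_smul_eq {Γ : Type*} [Group Γ] [Fintype Γ] [DecidableEq Γ] {s : Finset Γ}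
    (hs : s.Nonempty) (hfix : ∀ γ : Γ, γ • s = s) : s = Finset.univ := by
  obtain ⟨h, hh⟩ := hs
  refine Finset.eq_univ_of_forall fun g ↦ ?_
  rw [← hfix (g * h⁻¹)]
  simpa using Finset.smul_mem_smul_finset (a := g * h⁻¹) hh

variable {V Γ R : Type*} [Fintype V] [Group Γ] [Ring R] [LinearOrder R] [IsStrictOrderedRing R]
  {A : Matrix V V R} {t : V → Γ}

theorem eq_of_isIrreducible_mul_transpose {α : Type*} [MulAction Γ α] (hA : ∀ i j, 0 ≤ A i j)
    (hAAt : (A * Aᵀ).IsIrreducible) {f g : V → α} (h : ∀ i j, 0 < A i j → t j • f i = g j)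
    (i i' : V) : f i = f i' := by
  classical
  have eq_of_pow_pos (k : ℕ) : ∀ i', 0 < ((A * Aᵀ) ^ k) i i' → f i = f i' := by
    induction k with
    | zero =>
      intro i' hk
      by_contra hne
      simp [ne_of_apply_ne f hne] at hk
    | succ k ih =>
      intro i' hk
      obtain ⟨l, hil, hli'⟩ := (pow_succ_apply_pos_iff_of_nonneg hAAt.nonneg).1 hk
      obtain ⟨j, hlj, hi'j⟩ := (mul_apply_pos_iff_of_nonneg hA fun a b ↦ hA b a).1 hli'
      exact (ih l hil).trans (smul_left_cancel (t j) ((h l j hlj).trans (h i' j hi'j).symm))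
  obtain ⟨k, -, hk⟩ := (Matrix.isIrreducible_iff_exists_pow_pos hAAt.nonneg).1 hAAt i i'
  exact eq_of_pow_pos k i' hk

variable [DecidableEq V] [DecidableEq Γ] {S : ℕ → V → Finset Γ}

theorem card_le_card_of_pow_apply_pos (hA : ∀ i j, 0 ≤ A i j)
    (hS : ∀ N i j, 0 < A i j → t j • S N i ⊆ S (N + 1) j) (N : ℕ) {k : ℕ} {i j : V}
    (h : 0 < (A ^ k) i j) : #(S N i) ≤ #(S (N + k) j) := by
  induction k generalizing j with
  | zero =>
    obtain rfl : i = j := by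
      by_contra hij
      simp [hij] at h
    exact le_rfl
  | succ k ih =>
    obtain ⟨l, hil, hlj⟩ := (pow_succ_apply_pos_iff_of_nonneg hA).1 h
    calc #(S N i) ≤ #(S (N + k) l) := ih hil
      _ = #(t j • S (N + k) l) := (Finset.card_smul_finset _ _).symm
      _ ≤ #(S (N + (k + 1)) j) := Finset.card_le_card (hS _ _ _ hlj)

theorem exists_eventually_card_eq [Finite Γ] [Nonempty V] (hA : A.IsPrimitive)
    (hS : ∀ N i j, 0 < A i j → t j • S N i ⊆ S (N + 1) j) :
    ∃ m, (∀ N i, #(S N i) ≤ m) ∧ ∀ᶠ N in atTop, ∀ i, #(S N i) = m := by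
  have hbdd : BddAbove (Set.range fun p : ℕ × V ↦ #(S p.1 p.2)) := by
    have := Fintype.ofFinite Γ
    exact ⟨Fintype.card Γ, Set.forall_mem_range.2 fun p ↦ Finset.card_le_univ _⟩
  obtain ⟨⟨N₁, i₁⟩, hmax⟩ := Nat.sSup_mem (Set.range_nonempty _) hbdd
  have hle (N : ℕ) (i : V) : #(S N i) ≤ #(S N₁ i₁) :=
    (le_csSup hbdd (Set.mem_range_self (N, i))).trans hmax.ge
  obtain ⟨K, hK⟩ := eventually_atTop.1 (eventually_pow_apply_pos_of_isPrimitive hA)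
  refine ⟨#(S N₁ i₁), hle, eventually_atTop.2 ⟨N₁ + K, fun N hN i ↦ (hle N i).antisymm ?_⟩⟩
  obtain ⟨k, rfl⟩ := Nat.exists_eq_add_of_le (show N₁ ≤ N by lia)
  exact card_le_card_of_pow_apply_pos hA.nonneg hS N₁ (hK k (by lia) i₁ i)

theorem eventually_smul_eq [Finite Γ] (hA : A.IsPrimitive)
    (hS : ∀ N i j, 0 < A i j → t j • S N i ⊆ S (N + 1) j) :
    ∀ᶠ N in atTop, ∀ i j, 0 < A i j → t j • S N i = S (N + 1) j := by
  cases isEmpty_or_nonempty V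
  · simp
  obtain ⟨m, -, hm⟩ := exists_eventually_card_eq hA hS
  filter_upwards [hm, (tendsto_add_atTop_nat 1).eventually hm] with N hN hN' i j hij
  refine Finset.eq_of_subset_of_card_le (hS N i j hij) ?_
  rw [Finset.card_smul_finset, hN, hN']

theorem eventually_eq_univ [Fintype Γ] (hA : A.IsPrimitive) (hAAt : (A * Aᵀ).IsIrreducible)
    (hgen : Subgroup.closure (Set.range t) = ⊤)
    (hrho : ∀ ρ : Γ →* ℂˣ, (∃ γ, ρ γ ≠ 1) → ∃ i j, ρ (t i) ≠ ρ (t j))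
    (hS : ∀ N i j, 0 < A i j → t j • S N i ⊆ S (N + 1) j)
    {i₀ : V} (h₀ : (S 0 i₀).Nonempty) : ∀ᶠ N in atTop, ∀ i, S N i = Finset.univ := by
  have : Nonempty V := ⟨i₀⟩
  obtain ⟨m, hle, hcard⟩ := exists_eventually_card_eq hA hS
  obtain ⟨N₁, hN₁⟩ := eventually_atTop.1 (hcard.and (eventually_smul_eq hA hS))
  have hconst (N : ℕ) (hN : N₁ ≤ N) (i i' : V) : S N i = S N i' :=
    eq_of_isIrreducible_mul_transpose hA.nonneg hAAt (hN₁ N hN).2 i i'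
  have hstep (N : ℕ) (j : V) : t j • S (N₁ + N) i₀ = S (N₁ + (N + 1)) i₀ := by
    obtain ⟨i, hij⟩ := exists_apply_pos_of_isPrimitive hA j
    rw [hconst (N₁ + N) (by lia) i₀ i, (hN₁ _ (by lia)).2 i j hij,
      hconst (N₁ + N + 1) (by lia) j i₀, add_assoc]
  refine eventually_atTop.2 ⟨N₁, fun N hN i ↦ ?_⟩
  obtain ⟨N, rfl⟩ := Nat.exists_eq_add_of_le hN
  have hne : (S (N₁ + N) i₀).Nonempty := by
    rw [← Finset.card_pos, (hN₁ _ hN).1]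
    exact h₀.card_pos.trans_le (hle 0 i₀)
  rw [hconst _ hN i i₀]
  exact eq_univ_of_forall_smul_eq hne
    (smul_eq_of_forall_smul_eq_succ (T := fun N ↦ S (N₁ + N) i₀) hgen hrho hstep N)

end SetFamilies

section SkewProduct

open Filter
open scoped Pointwise Matrix

variable {V Γ R : Type*} [DecidableEq Γ]

/-- The skew product of the weighted graph `A` with `Γ` along the vertex labels `t`: an edge
`i → j` of `A` lifts to the edges `(i, g) → (j, t j * g)`, with the same weight. Its walks are the
walks of `A` together with the group elements they accumulate. -/
def skewProduct [Mul Γ] [Zero R] (A : Matrix V V R) (t : V → Γ) : Matrix (V × Γ) (V × Γ) R :=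
  .of fun x y ↦ if y.2 = t y.1 * x.2 then A x.1 y.1 else 0

theorem skewProduct_apply [Mul Γ] [Zero R] (A : Matrix V V R) (t : V → Γ) (x y : V × Γ) :
    skewProduct A t x y = if y.2 = t y.1 * x.2 then A x.1 y.1 else 0 :=
  rfl

variable [Fintype V] [DecidableEq V] [Group Γ] [Fintype Γ]

theorem skewProduct_pow_mulVec_comp_fst [Semiring R] (A : Matrix V V R) (t : V → Γ) (N : ℕ)
    (v : V → R) : skewProduct A t ^ N *ᵥ (v ∘ Prod.fst) = (A ^ N *ᵥ v) ∘ Prod.fst := by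
  have mulVec_comp_fst (v : V → R) : skewProduct A t *ᵥ (v ∘ Prod.fst) = (A *ᵥ v) ∘ Prod.fst := by
    ext x
    simp [Matrix.mulVec, dotProduct, Fintype.sum_prod_type, skewProduct_apply]
  induction N with
  | zero => simp
  | succ N ih => rw [pow_succ', pow_succ', ← Matrix.mulVec_mulVec, ih, mulVec_comp_fst,
      Matrix.mulVec_mulVec]

theorem comp_fst_vecMul_skewProduct_pow [Semiring R] (A : Matrix V V R) (t : V → Γ) (N : ℕ)
    (v : V → R) : (v ∘ Prod.fst) ᵥ* skewProduct A t ^ N = (v ᵥ* A ^ N) ∘ Prod.fst := by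
  have comp_fst_vecMul (v : V → R) :
      (v ∘ Prod.fst) ᵥ* skewProduct A t = (v ᵥ* A) ∘ Prod.fst := by
    ext y
    simp [Matrix.vecMul, dotProduct, Fintype.sum_prod_type, skewProduct_apply,
      ← inv_mul_eq_iff_eq_mul]
  induction N with
  | zero => simp
  | succ N ih => rw [pow_succ, pow_succ, ← Matrix.vecMul_vecMul, ih, comp_fst_vecMul,
      Matrix.vecMul_vecMul]

theorem sum_skewProduct_pow_apply [Semiring R] (A : Matrix V V R) (t : V → Γ) (N : ℕ) (x : V × Γ)
    (j : V) : ∑ γ, (skewProduct A t ^ N) x (j, γ) = (A ^ N) x.1 j := by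
  have h := congrFun (skewProduct_pow_mulVec_comp_fst A t N (Pi.single j 1)) x
  simpa [Matrix.mulVec, dotProduct, Fintype.sum_prod_type_right, Pi.single_apply] using h

theorem isPrimitive_skewProduct [Ring R] [LinearOrder R] [IsStrictOrderedRing R]
    {A : Matrix V V R} {t : V → Γ} (hA : A.IsPrimitive) (hAAt : (A * Aᵀ).IsIrreducible)
    (hgen : Subgroup.closure (Set.range t) = ⊤)
    (hrho : ∀ ρ : Γ →* ℂˣ, (∃ γ, ρ γ ≠ 1) → ∃ i j, ρ (t i) ≠ ρ (t j)) :
    (skewProduct A t).IsPrimitive := by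
  have hnonneg (x y : V × Γ) : 0 ≤ skewProduct A t x y := by
    rw [skewProduct_apply]
    split_ifs
    exacts [hA.nonneg _ _, le_rfl]
  have hpos (x : V × Γ) : ∀ᶠ N in atTop, ∀ y, 0 < (skewProduct A t ^ N) x y := by
    let S (N : ℕ) (i : V) : Finset Γ := {g | 0 < (skewProduct A t ^ N) x (i, g)}
    have hS (N : ℕ) (i j : V) (hij : 0 < A i j) : t j • S N i ⊆ S (N + 1) j := by
      rw [Finset.smul_finset_def, Finset.image_subset_iff]
      intro g hg
      simp only [S, Finset.mem_filter_univ] at hg ⊢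
      have hedge : 0 < skewProduct A t (i, g) (j, t j * g) := by simpa [skewProduct_apply] using hij
      exact (pow_succ_apply_pos_iff_of_nonneg hnonneg).2 ⟨(i, g), hg, hedge⟩
    have h₀ : (S 0 x.1).Nonempty := ⟨x.2, by simp [S]⟩
    filter_upwards [eventually_eq_univ hA hAAt hgen hrho hS h₀] with N hN y
    have := Finset.mem_univ y.2
    rw [← hN y.1] at this
    simpa [S] using this
  obtain ⟨K, hK, hK0⟩ := ((eventually_all.2 hpos).and (eventually_gt_atTop 0)).exists
  exact ⟨hnonneg, K, hK0, hK⟩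

end SkewProduct

section Walks

variable {V Γ R : Type*}

/-- The weight of a walk `w` in the weighted graph with adjacency matrix `A`. -/
def walkWeight [CommMonoid R] (A : Matrix V V R) {N : ℕ} (w : Fin (N + 1) → V) : R :=
  ∏ j : Fin N, A (w j.castSucc) (w j.succ)

/-- The group element of a walk `w`: the product of the labels of its vertices, with later vertices
on the left. -/
def walkProd [Monoid Γ] (t : V → Γ) {N : ℕ} (w : Fin (N + 1) → V) : Γ :=
  (List.ofFn fun j ↦ t (w j)).reverse.prod

theorem walkWeight_snoc [CommMonoid R] (A : Matrix V V R) {N : ℕ} (w : Fin (N + 1) → V) (v : V) :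
    walkWeight A (Fin.snoc w v : Fin (N + 2) → V) = walkWeight A w * A (w (Fin.last N)) v := by
  simp only [walkWeight, Fin.prod_univ_castSucc, Fin.snoc_castSucc, ← Fin.castSucc_succ,
    Fin.succ_last, Fin.snoc_last]

theorem walkProd_snoc [Monoid Γ] (t : V → Γ) {N : ℕ} (w : Fin (N + 1) → V) (v : V) :
    walkProd t (Fin.snoc w v : Fin (N + 2) → V) = t v * walkProd t w := by
  rw [walkProd, List.ofFn_succ']
  simp [walkProd, List.concat_eq_append]

theorem sum_fin_succ_eq_sum_snoc [Fintype V] [AddCommMonoid R] {N : ℕ} (F : (Fin (N + 1) → V) → R) :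
    ∑ w, F w = ∑ w : Fin N → V, ∑ v, F (Fin.snoc w v) := by
  rw [← (Fin.snocEquiv fun _ ↦ V).sum_comp, Fintype.sum_prod_type_right]
  rfl

variable [Fintype V] [DecidableEq V]

theorem sum_walkWeight_eq_skewProduct_pow [CommSemiring R] [Group Γ] [Fintype Γ] [DecidableEq Γ]
    (A : Matrix V V R) (t : V → Γ) (i j : V) (γ : Γ) (N : ℕ) :
    ∑ w : Fin (N + 1) → V with w 0 = i ∧ w (Fin.last N) = j ∧ walkProd t w = γ, walkWeight A w =
      (skewProduct A t ^ N) (i, t i) (j, γ) := by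
  induction N generalizing j γ with
  | zero =>
    rw [Finset.sum_filter, ← (Equiv.funUnique (Fin 1) V).symm.sum_comp]
    simp [walkWeight, walkProd, Matrix.one_apply, ite_and]
  | succ N ih =>
    have snoc_zero (w : Fin (N + 1) → V) (v : V) : (Fin.snoc w v : Fin (N + 2) → V) 0 = w 0 := by
      rw [← Fin.castSucc_zero, Fin.snoc_castSucc]
    calc
      _ = ∑ w : Fin (N + 1) → V with w 0 = i,
            walkWeight A w * skewProduct A t (w (Fin.last N), walkProd t w) (j, γ) := by
          simp only [Finset.sum_filter, sum_fin_succ_eq_sum_snoc (N := N + 1), snoc_zero,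
            Fin.snoc_last, walkProd_snoc, walkWeight_snoc, skewProduct_apply]
          refine Finset.sum_congr rfl fun w _ ↦ ?_
          simp [ite_and, eq_comm (a := γ)]
      _ = ∑ x : V × Γ, (∑ w : Fin (N + 1) → V with
            w 0 = i ∧ w (Fin.last N) = x.1 ∧ walkProd t w = x.2, walkWeight A w) *
              skewProduct A t x (j, γ) := by
          rw [← Finset.sum_fiberwise _ fun w ↦ (w (Fin.last N), walkProd t w)]
          refine Finset.sum_congr rfl fun x _ ↦ ?_
          rw [Finset.filter_filter, Finset.sum_mul]
          refine Finset.sum_congr (by simp only [Prod.ext_iff]) fun w hw ↦ ?_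
          obtain ⟨-, -, hlast, hprod⟩ := Finset.mem_filter.1 hw
          rw [hlast, hprod]
      _ = (skewProduct A t ^ (N + 1)) (i, t i) (j, γ) := by
          simp only [ih, pow_succ, Matrix.mul_apply]

theorem sum_walkWeight_eq_pow [CommSemiring R] (A : Matrix V V R) (i j : V) (N : ℕ) :
    ∑ w : Fin (N + 1) → V with w 0 = i ∧ w (Fin.last N) = j, walkWeight A w = (A ^ N) i j := by
  rw [← sum_skewProduct_pow_apply A (fun _ ↦ ()) N (i, ()) j]
  simp [← sum_walkWeight_eq_skewProduct_pow A (fun _ ↦ ())]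

end Walks

section Contraction

open Filter
open scoped Matrix Topology

theorem exists_geometric_bound_pow_div {q : ℝ} (hq₀ : 0 < q) (hq₁ : q < 1) {K : ℕ} (hK : 0 < K) :
    ∃ C : ℝ, 0 < C ∧ ∃ c : ℝ, 0 < c ∧ c < 1 ∧ ∀ N : ℕ, q ^ (N / K) ≤ C * c ^ N := by
  let c : ℝ := q ^ (K : ℝ)⁻¹
  have hc₀ : 0 < c := Real.rpow_pos_of_pos hq₀ _
  have hc₁ : c < 1 := Real.rpow_lt_one hq₀.le hq₁ (by positivity)
  have hcK : c ^ K = q := Real.rpow_inv_natCast_pow hq₀.le hK.ne'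
  refine ⟨q⁻¹, inv_pos.2 hq₀, c, hc₀, hc₁, fun N ↦ ?_⟩
  rw [le_inv_mul_iff₀ hq₀, ← hcK, ← pow_mul, ← pow_add]
  refine pow_le_pow_of_le_one hc₀.le hc₁.le ?_
  linarith [Nat.div_add_mod N K, Nat.mod_lt N hK]

variable {X Y : Type*}

theorem exists_forall_mul_apply_le_apply [Finite X] [Finite Y] {Q : Matrix X Y ℝ}
    (hQ : ∀ x y, 0 < Q x y) :
    ∃ ε : ℝ, 0 < ε ∧ ε < 1 ∧ ∀ x x' y, ε * Q x' y ≤ Q x y := by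
  have hlim (x x' : X) (y : Y) : ∀ᶠ ε : ℝ in 𝓝[>] 0, ε * Q x' y ≤ Q x y := by
    have htendsto : Tendsto (fun ε : ℝ ↦ ε * Q x' y) (𝓝[>] 0) (𝓝 0) := by
      simpa using (continuous_mul_const (Q x' y)).continuousWithinAt.tendsto (x := (0 : ℝ))
    exact htendsto.eventually_le_const (hQ x y)
  have hIoo : ∀ᶠ ε : ℝ in 𝓝[>] 0, ε ∈ Set.Ioo 0 1 := Ioo_mem_nhdsGT one_pos
  obtain ⟨ε, ⟨hε₀, hε₁⟩, hε⟩ := (hIoo.and (eventually_all.2 fun x ↦ eventually_all.2 fun x' ↦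
    eventually_all.2 fun y ↦ hlim x x' y)).exists
  exact ⟨ε, hε₀, hε₁, hε⟩

variable [Fintype X]

theorem vecMul_mono {Q : Matrix X Y ℝ} (hQ : ∀ x y, 0 ≤ Q x y) {v w : X → ℝ} (h : v ≤ w) :
    v ᵥ* Q ≤ w ᵥ* Q :=
  fun y ↦ Finset.sum_le_sum fun x _ ↦ mul_le_mul_of_nonneg_right (h x) (hQ x y)

theorem vecMul_mem_Icc_smul {Q : Matrix X Y ℝ} (hQ : ∀ x y, 0 ≤ Q x y) {a w : X → ℝ} {l u : ℝ}
    (h : a ∈ Set.Icc (l • w) (u • w)) : a ᵥ* Q ∈ Set.Icc (l • (w ᵥ* Q)) (u • (w ᵥ* Q)) := by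
  rw [← Matrix.smul_vecMul, ← Matrix.smul_vecMul]
  exact ⟨vecMul_mono hQ h.1, vecMul_mono hQ h.2⟩

variable {Q : Matrix X Y ℝ} {ε : ℝ} {a b w : X → ℝ} {l u : ℝ}

theorem mul_sum_mul_vecMul_le (hε : ∀ x x' y, ε * Q x' y ≤ Q x y) (hb : 0 ≤ b) (hw : 0 ≤ w)
    (y : Y) : ε * (∑ x, b x) * (w ᵥ* Q) y ≤ (∑ x, w x) * (b ᵥ* Q) y := by
  have vecMul_apply (v : X → ℝ) : (v ᵥ* Q) y = ∑ x, v x * Q x y := rfl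
  calc ε * (∑ x, b x) * (w ᵥ* Q) y = ∑ x, ∑ x', b x * w x' * (ε * Q x' y) := by
        rw [vecMul_apply, mul_assoc, Finset.sum_mul_sum, Finset.mul_sum]
        refine Finset.sum_congr rfl fun x _ ↦ ?_
        rw [Finset.mul_sum]
        exact Finset.sum_congr rfl fun x' _ ↦ by ring
    _ ≤ ∑ x, ∑ x', b x * w x' * Q x y := by
        gcongr with x _ x' _
        exacts [mul_nonneg (hb x) (hw x'), hε x x' y]
    _ = (∑ x, w x) * (b ᵥ* Q) y := by
        rw [vecMul_apply, Finset.sum_mul_sum, Finset.sum_comm]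
        exact Finset.sum_congr rfl fun x _ ↦ Finset.sum_congr rfl fun x' _ ↦ by ring

theorem smul_vecMul_le_vecMul (hε : ∀ x x' y, ε * Q x' y ≤ Q x y) (hw : 0 ≤ w)
    (hs : 0 < ∑ x, w x) (h : l • w ≤ a) :
    ((1 - ε) * l + ε * ((∑ x, a x) / ∑ x, w x)) • (w ᵥ* Q) ≤ a ᵥ* Q := by
  intro y
  have hb := mul_sum_mul_vecMul_le hε (sub_nonneg.2 h) hw y
  simp only [Pi.sub_apply, Pi.smul_apply, smul_eq_mul, Finset.sum_sub_distrib, ← Finset.mul_sum,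
    Matrix.sub_vecMul, Matrix.smul_vecMul] at hb ⊢
  refine le_of_mul_le_mul_left ?_ hs
  field_simp
  linarith

theorem exists_vecMul_mem_Icc_smul (hQ : ∀ x x' y, ε * Q x' y ≤ Q x y) (hw : 0 ≤ w)
    (h : a ∈ Set.Icc (l • w) (u • w)) : ∃ l' u', u' - l' = (1 - ε) * (u - l) ∧
      a ᵥ* Q ∈ Set.Icc (l' • (w ᵥ* Q)) (u' • (w ᵥ* Q)) := by
  obtain hs | hs := (Finset.sum_nonneg fun x _ ↦ hw x).eq_or_lt
  · obtain rfl : w = 0 := (Fintype.sum_eq_zero_iff_of_nonneg hw).1 hs.symm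
    obtain rfl : a = 0 := by simpa using h
    exact ⟨(1 - ε) * l, (1 - ε) * u, by ring, by simp⟩
  · set θ := (∑ x, a x) / ∑ x, w x with hθ
    refine ⟨(1 - ε) * l + ε * θ, (1 - ε) * u + ε * θ, by ring,
      smul_vecMul_le_vecMul hQ hw hs h.1, ?_⟩
    have hneg := smul_vecMul_le_vecMul (a := -a) (l := -u) hQ hw hs (by simpa using h.2)
    simp only [Pi.neg_apply, Finset.sum_neg_distrib, neg_div, ← hθ, Matrix.neg_vecMul] at hneg
    have hcoeff : -((1 - ε) * u + ε * θ) = (1 - ε) * -u + ε * -θ := by ring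
    rw [← neg_le_neg_iff, ← neg_smul, hcoeff]
    exact hneg

theorem exists_vecMul_pow_mem_Icc_smul [DecidableEq X] {Q : Matrix X X ℝ} (hQ : ∀ x y, 0 ≤ Q x y)
    (hε : ∀ x x' y, ε * Q x' y ≤ Q x y) (hw : 0 ≤ w) (h : a ∈ Set.Icc (l • w) (u • w)) (m : ℕ) :
    ∃ l' u', u' - l' = (1 - ε) ^ m * (u - l) ∧
      a ᵥ* Q ^ m ∈ Set.Icc (l' • (w ᵥ* Q ^ m)) (u' • (w ᵥ* Q ^ m)) := by
  induction m with
  | zero => exact ⟨l, u, by simp, by simpa using h⟩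
  | succ m ih =>
    obtain ⟨l₁, u₁, hd₁, h₁⟩ := ih
    have hwm : 0 ≤ w ᵥ* Q ^ m := by
      simpa using vecMul_mono (Matrix.pow_apply_nonneg hQ m) hw
    obtain ⟨l₂, u₂, hd₂, h₂⟩ := exists_vecMul_mem_Icc_smul hε hwm h₁
    refine ⟨l₂, u₂, by rw [hd₂, hd₁, pow_succ']; ring, ?_⟩
    simpa only [Matrix.vecMul_vecMul, ← pow_succ] using h₂

theorem exists_geometric_contraction_of_isPrimitive [DecidableEq X] {B : Matrix X X ℝ}
    (hB : B.IsPrimitive) : ∃ C : ℝ, 0 < C ∧ ∃ c : ℝ, 0 < c ∧ c < 1 ∧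
      ∀ (a w : X → ℝ) (l u : ℝ), 0 ≤ w → l ≤ u → a ∈ Set.Icc (l • w) (u • w) → ∀ N : ℕ,
        ∃ l' u', u' - l' ≤ C * c ^ N * (u - l) ∧
          a ᵥ* B ^ N ∈ Set.Icc (l' • (w ᵥ* B ^ N)) (u' • (w ᵥ* B ^ N)) := by
  obtain ⟨K, hK₀, hK⟩ := hB.exists_pos_pow
  obtain ⟨ε, hε₀, hε₁, hε⟩ := exists_forall_mul_apply_le_apply hK
  obtain ⟨C, hC, c, hc₀, hc₁, hCc⟩ :=
    exists_geometric_bound_pow_div (sub_pos.2 hε₁) (sub_lt_self 1 hε₀) hK₀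
  refine ⟨C, hC, c, hc₀, hc₁, fun a w l u hw hlu h N ↦ ?_⟩
  obtain ⟨l', u', hd, h'⟩ :=
    exists_vecMul_pow_mem_Icc_smul (fun x y ↦ (hK x y).le) hε hw h (N / K)
  refine ⟨l', u', hd.trans_le (mul_le_mul_of_nonneg_right (hCc N) (sub_nonneg.2 hlu)), ?_⟩
  have hmod := vecMul_mem_Icc_smul (Matrix.pow_apply_nonneg hB.nonneg (N % K)) h'
  simpa only [Matrix.vecMul_vecMul, ← pow_mul, ← pow_add, Nat.div_add_mod] using hmod

theorem abs_div_sum_sub_one_div_card_le {ι : Type*} [Fintype ι] {f : ι → ℝ}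
    (hf : 0 < ∑ i, f i) (h : ∀ i, f i ∈ Set.Icc (l * ∑ i, f i) (u * ∑ i, f i)) (i : ι) :
    |f i / ∑ i, f i - 1 / Fintype.card ι| ≤ u - l := by
  have : Nonempty ι := ⟨i⟩
  have hcard : (0 : ℝ) < Fintype.card ι := by exact_mod_cast Fintype.card_pos
  set s := ∑ i, f i with hs
  refine Real.dist_le_of_mem_Icc ⟨(le_div_iff₀ hf).2 (h i).1, (div_le_iff₀ hf).2 (h i).2⟩
    ⟨(le_div_iff₀ hcard).2 ?_, (div_le_iff₀ hcard).2 ?_⟩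
  · have := Finset.card_nsmul_le_sum Finset.univ f _ fun i _ ↦ (h i).1
    rw [nsmul_eq_mul, Finset.card_univ, ← hs] at this
    exact le_of_mul_le_mul_right (by linarith) hf
  · have := Finset.sum_le_card_nsmul Finset.univ f _ fun i _ ↦ (h i).2
    rw [nsmul_eq_mul, Finset.card_univ, ← hs] at this
    exact le_of_mul_le_mul_right (by linarith) hf

end Contraction

theorem stmt1_general {V Γ : Type*} [Fintype V] [DecidableEq V] [Group Γ] [Fintype Γ]
    [DecidableEq Γ] {A : Matrix V V ℝ} {t : V → Γ} (hA : A.IsPrimitive)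
    (hAAt : (A * A.transpose).IsIrreducible) (hgen : Subgroup.closure (Set.range t) = ⊤)
    (hrho : ∀ ρ : Γ →* ℂˣ, (∃ γ, ρ γ ≠ 1) → ∃ i j, ρ (t i) ≠ ρ (t j)) (i₀ j₀ : V) :
    ∃ N₀ : ℕ, ∃ C : ℝ, 0 < C ∧ ∃ c : ℝ, 0 < c ∧ c < 1 ∧ ∀ N, N₀ ≤ N →
      0 < ∑ w : Fin (N + 1) → V with w 0 = i₀ ∧ w (Fin.last N) = j₀, walkWeight A w ∧
      ∀ γ : Γ,
        |(∑ w : Fin (N + 1) → V with w 0 = i₀ ∧ w (Fin.last N) = j₀ ∧ walkProd t w = γ,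
            walkWeight A w) /
          (∑ w : Fin (N + 1) → V with w 0 = i₀ ∧ w (Fin.last N) = j₀, walkWeight A w) -
            1 / Fintype.card Γ| ≤ C * c ^ N := by
  obtain ⟨C, hC, c, hc₀, hc₁, hcontr⟩ := exists_geometric_contraction_of_isPrimitive
    (isPrimitive_skewProduct hA hAAt hgen hrho)
  obtain ⟨N₀, hN₀⟩ := Filter.eventually_atTop.1 (eventually_pow_apply_pos_of_isPrimitive hA)
  refine ⟨N₀, C, hC, c, hc₀, hc₁, fun N hN ↦ ?_⟩
  have hpos : 0 < (A ^ N) i₀ j₀ := hN₀ N hN i₀ j₀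
  simp only [sum_walkWeight_eq_pow, sum_walkWeight_eq_skewProduct_pow]
  refine ⟨hpos, fun γ ↦ ?_⟩
  have hw : 0 ≤ (Pi.single i₀ 1 ∘ Prod.fst : V × Γ → ℝ) := fun x ↦
    (Pi.single_nonneg.2 zero_le_one : 0 ≤ (Pi.single i₀ 1 : V → ℝ)) x.1
  have hle : Pi.single (i₀, t i₀) 1 ≤ (Pi.single i₀ 1 ∘ Prod.fst : V × Γ → ℝ) := by
    intro x
    obtain rfl | hx := eq_or_ne x (i₀, t i₀)
    · simp
    · simpa [hx] using hw x
  obtain ⟨l, u, hlu, hl, hu⟩ := hcontr (Pi.single (i₀, t i₀) 1) (Pi.single i₀ 1 ∘ Prod.fst) 0 1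
    hw zero_le_one ⟨by simp, by simpa using hle⟩ N
  have hsum : (∑ γ, (skewProduct A t ^ N) (i₀, t i₀) (j₀, γ)) = (A ^ N) i₀ j₀ :=
    sum_skewProduct_pow_apply A t N (i₀, t i₀) j₀
  rw [← hsum] at hpos ⊢
  refine (abs_div_sum_sub_one_div_card_le hpos (fun γ ↦ ⟨?_, ?_⟩) γ).trans (by simpa using hlu)
  · simpa [comp_fst_vecMul_skewProduct_pow, hsum] using hl (j₀, γ)
  · simpa [comp_fst_vecMul_skewProduct_pow, hsum] using hu (j₀, γ)

/-- equidistribution of products along walks between two fixed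
vertices, with exponential speed of convergence. -/
theorem stmt1 {Γ : Type*} [Group Γ] [Fintype Γ] [DecidableEq Γ]
    (n : ℕ) (hn : 1 ≤ n) (A : Fin n → Fin n → ℕ) (t : Fin n → Γ)
    (hsymm : ∀ i j, A i j = A j i)
    (hprim : ∃ k, 1 ≤ k ∧ ∀ i j, 0 < ((Matrix.of A) ^ k) i j)
    (hgen : Subgroup.closure (Set.range t) = ⊤)
    (hrho : ∀ ρ : Γ →* ℂˣ, (∃ γ, ρ γ ≠ 1) → ∃ i j, ρ (t i) ≠ ρ (t j))
    (i₀ j₀ : Fin n) :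
    ∃ N₀ : ℕ, ∃ C : ℝ, 0 < C ∧ ∃ c : ℝ, 0 < c ∧ c < 1 ∧
      ∀ N, N₀ ≤ N →
        (0 < ∑ w ∈ Finset.univ.filter
              (fun w : Fin (N + 1) → Fin n => w 0 = i₀ ∧ w (Fin.last N) = j₀),
            ((∏ j : Fin N, A (w j.castSucc) (w j.succ) : ℕ) : ℝ)) ∧
        ∀ γ : Γ,
          |(∑ w ∈ Finset.univ.filter
                (fun w : Fin (N + 1) → Fin n =>
                  w 0 = i₀ ∧ w (Fin.last N) = j₀ ∧
                    (List.ofFn fun j => t (w j)).reverse.prod = γ),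
              ((∏ j : Fin N, A (w j.castSucc) (w j.succ) : ℕ) : ℝ)) /
            (∑ w ∈ Finset.univ.filter
                (fun w : Fin (N + 1) → Fin n => w 0 = i₀ ∧ w (Fin.last N) = j₀),
              ((∏ j : Fin N, A (w j.castSucc) (w j.succ) : ℕ) : ℝ))
            - 1 / (Fintype.card Γ : ℝ)| ≤ C * c ^ N := by
  simpa [walkWeight, walkProd] using stmt1_general (isPrimitive_map_natCast hprim)
    (isIrreducible_mul_transpose_of_isSymm (isPrimitive_map_natCast hprim)
      (Matrix.IsSymm.ext fun i j ↦ by simp [hsymm i j])) hgen hrho i₀ j₀
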